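/- Let n ≥ 1, i ∈ {1,…,n}, and let ψ : (0,∞) → ℝ be twice continuously differentiable with bounded support. Define F : ℝ^n \ {0} → ℝ^n by F(x) = ψ′(|x|) x_i x + (ψ(|x|)|x| + ∫_{|x|}^∞ ψ(t) dt) e_i. Then for all l, m ∈ {1,…,n} and every x ∈ ℝ^n \ {0}, the partial derivative ∂F_l/∂x_m (x) equals (ψ″(|x|)/|x|) x_i x_l x_m + ψ′(|x|)(δ_{lm} x_i + δ_{im} x_l + δ_{il} x_m); in particular, the Jacobian matrix of F is symmetric at every x ≠ 0. -/

import Mathlib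

open MeasureTheory Filter Set

/-- A function `ζ : (0,∞) → ℝ` (modeled as `ℝ → ℝ`, values on nonpositive reals irrelevant)
has bounded support. -/
def BddSupp (ζ : ℝ → ℝ) : Prop := ∃ R : ℝ, ∀ s, R ≤ s → ζ s = 0

/-! With `g r = ψ r * r + ∫ t in Ioi r, ψ t` one has `g' r = ψ' r * r`: the tail integral cancels the
undifferentiated `ψ`. Hence `F` is the gradient of `g ‖x‖ * ⟪a, x⟫` for `a = eᵢ`, and its Jacobian
is a Hessian. -/

theorem BddSupp.integrableAtFilter_atTop {ζ : ℝ → ℝ} (hζ : BddSupp ζ) :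
    IntegrableAtFilter ζ atTop := by
  obtain ⟨R, hR⟩ := hζ
  exact ⟨Ici R, Ici_mem_atTop R,
    integrableOn_zero.congr_fun (fun s hs => (hR s hs).symm) measurableSet_Ici⟩

section RadialField

open scoped InnerProductSpace

variable {E : Type*} [NormedAddCommGroup E]

theorem integrableOn_Ioi_of_continuousOn_of_integrableAtFilter_atTop {f : ℝ → E} {a b : ℝ}
    (hf : ContinuousOn f (Ioi a)) (hint : IntegrableAtFilter f atTop) (hab : a < b) :
    IntegrableOn f (Ioi b) := by
  have hloc : LocallyIntegrableOn f (Ici b) :=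
    (hf.mono (Ici_subset_Ioi.mpr hab)).locallyIntegrableOn measurableSet_Ici
  exact (integrableOn_Ici_iff_integrableAtFilter_atTop.mpr ⟨hint, hloc⟩).mono_set
    Ioi_subset_Ici_self

theorem hasDerivAt_integral_Ioi [NormedSpace ℝ E] [CompleteSpace E] {f : ℝ → E} {a b : ℝ}
    (hf : IntegrableOn f (Ioi a)) (hab : a < b) (hb : ContinuousAt f b) :
    HasDerivAt (fun r => ∫ t in Ioi r, f t) (-f b) b := by
  have hmeas : StronglyMeasurableAtFilter f (nhds b) :=
    ⟨Ioi a, Ioi_mem_nhds hab, hf.aestronglyMeasurable⟩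
  have hint : IntervalIntegrable f volume a b :=
    (intervalIntegrable_iff_integrableOn_Ioc_of_le hab.le).mpr (hf.mono_set Ioc_subset_Ioi_self)
  have hprim := (intervalIntegral.integral_hasDerivAt_right hint hmeas hb).const_sub
    (∫ t in Ioi a, f t)
  refine hprim.congr_of_eventuallyEq ?_
  filter_upwards [Ioi_mem_nhds hab] with r hr
  rw [← intervalIntegral.integral_Ioi_sub_Ioi hf (le_of_lt hr), sub_sub_cancel]

theorem hasDerivAt_mul_id_add_integral_Ioi {ψ : ℝ → ℝ} {ψ' a r : ℝ} (hψ : HasDerivAt ψ ψ' r)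
    (hint : IntegrableOn ψ (Ioi a)) (har : a < r) :
    HasDerivAt (fun s => ψ s * s + ∫ t in Ioi s, ψ t) (ψ' * r) r := by
  refine ((hψ.mul (hasDerivAt_id r)).add
    (hasDerivAt_integral_Ioi hint har hψ.continuousAt)).congr_deriv ?_
  simp only [id, mul_one, add_neg_cancel_right]

variable [InnerProductSpace ℝ E] {x : E}

theorem hasFDerivAt_norm_of_ne_zero (hx : x ≠ 0) :
    HasFDerivAt (fun y : E => ‖y‖) (‖x‖⁻¹ • innerSL ℝ x) x := by
  have hsqrt := (hasStrictFDerivAt_norm_sq x).hasFDerivAt.sqrt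
    (pow_ne_zero 2 (norm_ne_zero_iff.mpr hx))
  simp only [Real.sqrt_sq (norm_nonneg _)] at hsqrt
  refine hsqrt.congr_fderiv ?_
  module

theorem hasFDerivAt_comp_norm {f : ℝ → ℝ} {f' : ℝ} (hf : HasDerivAt f f' ‖x‖) (hx : x ≠ 0) :
    HasFDerivAt (fun y : E => f ‖y‖) ((f' / ‖x‖) • innerSL ℝ x) x := by
  refine (hf.comp_hasFDerivAt x (hasFDerivAt_norm_of_ne_zero hx)).congr_fderiv ?_
  rw [smul_smul, div_eq_mul_inv]

-- The hypothesis on `g` makes the field the gradient of `y ↦ g ‖y‖ * ⟪a, y⟫`.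
theorem hasFDerivAt_radial_smul_add_radial_smul {f g : ℝ → ℝ} {f' : ℝ}
    (hf : HasDerivAt f f' ‖x‖) (hg : HasDerivAt g (f ‖x‖ * ‖x‖) ‖x‖) (hx : x ≠ 0) (a : E) :
    HasFDerivAt (fun y : E => (f ‖y‖ * ⟪a, y⟫_ℝ) • y + g ‖y‖ • a)
      ((f' / ‖x‖ * ⟪a, x⟫_ℝ) • (innerSL ℝ x).smulRight x +
        f ‖x‖ • (⟪a, x⟫_ℝ • ContinuousLinearMap.id ℝ E + (innerSL ℝ a).smulRight x +
          (innerSL ℝ x).smulRight a)) x := by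
  have hinner : HasFDerivAt (fun y : E => ⟪a, y⟫_ℝ) (innerSL ℝ a) x := (innerSL ℝ a).hasFDerivAt
  have hfst := ((hasFDerivAt_comp_norm hf hx).mul hinner).smul (hasFDerivAt_id x)
  have hsnd := (hasFDerivAt_comp_norm hg hx).smul_const a
  refine (hfst.add hsnd).congr_fderiv ?_
  rw [mul_div_cancel_right₀ _ (norm_ne_zero_iff.mpr hx)]
  ext v
  simp only [Pi.mul_apply, id_eq, add_apply, smul_apply, ContinuousLinearMap.id_apply,
    ContinuousLinearMap.smulRight_apply, coe_innerSL_apply, smul_eq_mul]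
  module

theorem stmt16_general {ψ : ℝ → ℝ} (hψ : DifferentiableOn ℝ ψ (Ioi 0))
    (hψ' : DifferentiableOn ℝ (deriv ψ) (Ioi 0)) (hint : IntegrableAtFilter ψ atTop) (a : E)
    {F : E → E}
    (hF : ∀ x : E, x ≠ 0 →
      F x = (deriv ψ ‖x‖ * ⟪a, x⟫_ℝ) • x + (ψ ‖x‖ * ‖x‖ + ∫ t in Ioi ‖x‖, ψ t) • a)
    (v w : E) (hx : x ≠ 0) :
    fderiv ℝ (fun y => ⟪v, F y⟫_ℝ) x w =
        deriv (deriv ψ) ‖x‖ / ‖x‖ * ⟪a, x⟫_ℝ * ⟪v, x⟫_ℝ * ⟪w, x⟫_ℝ +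
          deriv ψ ‖x‖ * (⟪v, w⟫_ℝ * ⟪a, x⟫_ℝ + ⟪a, w⟫_ℝ * ⟪v, x⟫_ℝ + ⟪a, v⟫_ℝ * ⟪w, x⟫_ℝ) ∧
      fderiv ℝ (fun y => ⟪v, F y⟫_ℝ) x w = fderiv ℝ (fun y => ⟪w, F y⟫_ℝ) x v := by
  have hr : 0 < ‖x‖ := norm_pos_iff.mpr hx
  have hnhds : Ioi 0 ∈ nhds ‖x‖ := Ioi_mem_nhds hr
  have htail := integrableOn_Ioi_of_continuousOn_of_integrableAtFilter_atTop hψ.continuousOn hint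
    (half_pos hr)
  have hcoef := hasDerivAt_mul_id_add_integral_Ioi (hψ.hasDerivAt hnhds) htail (half_lt_self hr)
  have hDF := (hasFDerivAt_radial_smul_add_radial_smul (hψ'.hasDerivAt hnhds) hcoef hx
    a).congr_of_eventuallyEq (eventually_ne_nhds hx |>.mono hF)
  have hformula (v w : E) : fderiv ℝ (fun y => ⟪v, F y⟫_ℝ) x w =
      deriv (deriv ψ) ‖x‖ / ‖x‖ * ⟪a, x⟫_ℝ * ⟪v, x⟫_ℝ * ⟪w, x⟫_ℝ +
        deriv ψ ‖x‖ * (⟪v, w⟫_ℝ * ⟪a, x⟫_ℝ + ⟪a, w⟫_ℝ * ⟪v, x⟫_ℝ + ⟪a, v⟫_ℝ * ⟪w, x⟫_ℝ) := by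
    have hDFv : HasFDerivAt (fun y => ⟪v, F y⟫_ℝ) _ x := (innerSL ℝ v).hasFDerivAt.comp x hDF
    rw [hDFv.fderiv]
    simp only [ContinuousLinearMap.comp_apply, add_apply, smul_apply, map_add, map_smul,
      ContinuousLinearMap.smulRight_apply, ContinuousLinearMap.id_apply, coe_innerSL_apply,
      smul_eq_mul, real_inner_comm a v, real_inner_comm x w]
    ring
  refine ⟨hformula v w, ?_⟩
  rw [hformula v w, hformula w v, real_inner_comm v w]
  ring

end RadialField

/-- The partial derivatives of the vector field
`F(x) = ψ'(|x|) xᵢ x + (ψ(|x|)|x| + ∫_{|x|}^∞ ψ(t) dt) eᵢ` on `ℝⁿ \ {0}`;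
in particular its Jacobian matrix is symmetric there. -/
theorem stmt16 (n : ℕ) (hn : 1 ≤ n) (i : Fin n) (ψ : ℝ → ℝ)
    (hψ : ContDiffOn ℝ 2 ψ (Set.Ioi 0)) (hb : BddSupp ψ)
    (F : EuclideanSpace ℝ (Fin n) → EuclideanSpace ℝ (Fin n))
    (hF : ∀ x : EuclideanSpace ℝ (Fin n), x ≠ 0 →
      F x = (deriv ψ ‖x‖ * x i) • x +
        (ψ ‖x‖ * ‖x‖ + ∫ t in Set.Ioi ‖x‖, ψ t) • EuclideanSpace.single i 1) :
    ∀ l m : Fin n, ∀ x : EuclideanSpace ℝ (Fin n), x ≠ 0 →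
      (fderiv ℝ (fun y : EuclideanSpace ℝ (Fin n) => F y l) x (EuclideanSpace.single m 1) =
          deriv (deriv ψ) ‖x‖ / ‖x‖ * x i * x l * x m +
            deriv ψ ‖x‖ *
              ((if l = m then (1:ℝ) else 0) * x i + (if i = m then (1:ℝ) else 0) * x l +
                (if i = l then (1:ℝ) else 0) * x m)) ∧
        fderiv ℝ (fun y : EuclideanSpace ℝ (Fin n) => F y l) x (EuclideanSpace.single m 1) =
          fderiv ℝ (fun y : EuclideanSpace ℝ (Fin n) => F y m) x (EuclideanSpace.single l 1) := by
  intro l m x hx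
  simpa [EuclideanSpace.inner_single_left, eq_comm] using
    stmt16_general (hψ.differentiableOn two_ne_zero)
      ((hψ.deriv_of_isOpen isOpen_Ioi one_add_one_eq_two.le).differentiableOn one_ne_zero)
      hb.integrableAtFilter_atTop (EuclideanSpace.single i 1)
      (by simpa [EuclideanSpace.inner_single_left] using hF)
      (EuclideanSpace.single l 1) (EuclideanSpace.single m 1) hx
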